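/- arXiv:0911.1019 — 2 statements merged into one kernel-verified Lean document; each statement's English description precedes it below -/
import Mathlib

section
/- Let n ≥ 1 be a natural number, and for every ε ∈ [0,1] define a_ε(x) = λ_{2n−1} + ε·(a(x) − λ_{2n−1}), where a ∈ L_T satisfies λ_{2n−1} ≺ a and ∫_0^T |a(x) − λ_{2n−1}| dx ≤ (8πn(n+1)/T)·cot(nπ/(2(n+1))). Then for every ε ∈ (0,1], the periodic problem u'' + a_ε(x)u = 0 on (0,T), u(0) = u(T), u'(0) = u'(T), has only the trivial solution. -/
open MeasureTheory Set Real

/-- `u` is a solution of `u'' + a·u = 0` on `[c,d]`, with derivative function `v`. -/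
def IsSolOn (a u v : ℝ → ℝ) (c d : ℝ) : Prop :=
  (∀ x ∈ Set.Icc c d, HasDerivWithinAt u (v x) (Set.Icc c d) x) ∧
  (∀ x ∈ Set.Icc c d, v x = v c - ∫ t in c..x, a t * u t)

/-- Membership in `L_T`: measurable, `T`-periodic and integrable on `[0,T]`. -/
def MemLT (T : ℝ) (a : ℝ → ℝ) : Prop :=
  Measurable a ∧ (∀ x, a (x + T) = a x) ∧ IntegrableOn a (Set.Icc 0 T)

/-- `c ≺ d` : `c ≤ d` a.e. on `[0,T]` and `c < d` on a set of positive measure. -/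
def Prec (T : ℝ) (c d : ℝ → ℝ) : Prop :=
  (∀ᵐ x ∂(volume.restrict (Set.Icc 0 T)), c x ≤ d x) ∧
  0 < volume {x ∈ Set.Icc 0 T | c x < d x}

/-- `(u,v)` solves the periodic problem `u'' + a u = 0`, `u(0)=u(T)`, `u'(0)=u'(T)`. -/
def PeriodicSol (T : ℝ) (a u v : ℝ → ℝ) : Prop :=
  IsSolOn a u v 0 T ∧ u 0 = u T ∧ v 0 = v T

/-- `(u,v)` solves the antiperiodic problem `u'' + a u = 0`, `u(0)+u(T)=0`, `u'(0)+u'(T)=0`. -/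
def AntiperiodicSol (T : ℝ) (a u v : ℝ → ℝ) : Prop :=
  IsSolOn a u v 0 T ∧ u 0 + u T = 0 ∧ v 0 + v T = 0

/-- The `(2n-1)`-st periodic eigenvalue `λ_{2n-1} = 4 n² π² / T²`. -/
noncomputable def lam (T : ℝ) (n : ℕ) : ℝ := 4 * (n : ℝ) ^ 2 * Real.pi ^ 2 / T ^ 2

/-- The `(2n-1)`-st antiperiodic eigenvalue `λ̃_{2n-1} = (2n-1)² π² / T²`. -/
noncomputable def lamT (T : ℝ) (n : ℕ) : ℝ := (2 * (n : ℝ) - 1) ^ 2 * Real.pi ^ 2 / T ^ 2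

/-- The set `Λ_n`. -/
def LambdaN (T : ℝ) (n : ℕ) : Set (ℝ → ℝ) :=
  {a | MemLT T a ∧ Prec T (fun _ => lam T n) a ∧
    ∃ u v : ℝ → ℝ, PeriodicSol T a u v ∧ ∃ x ∈ Set.Icc 0 T, u x ≠ 0}

/-- The set `Λ̃_n`. -/
def LambdaTildeN (T : ℝ) (n : ℕ) : Set (ℝ → ℝ) :=
  {a | MemLT T a ∧ Prec T (fun _ => lamT T n) a ∧
    ∃ u v : ℝ → ℝ, AntiperiodicSol T a u v ∧ ∃ x ∈ Set.Icc 0 T, u x ≠ 0}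

/-- The constant `β_{1,n}` of the periodic `L¹` Lyapunov inequality. -/
noncomputable def beta1 (T : ℝ) (n : ℕ) : ℝ :=
  8 * Real.pi * (n : ℝ) * ((n : ℝ) + 1) / T * Real.cot ((n : ℝ) * Real.pi / (2 * ((n : ℝ) + 1)))

/-- The constant `β̃_{1,n}` of the antiperiodic `L¹` Lyapunov inequality. -/
noncomputable def betaT1 (T : ℝ) (n : ℕ) : ℝ :=
  2 * Real.pi * (2 * (n : ℝ) - 1) * (2 * (n : ℝ) + 1) / T *
    Real.cot ((2 * (n : ℝ) - 1) * Real.pi / (2 * (2 * (n : ℝ) + 1)))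


/-- `f` is absolutely continuous on `[0,T]` with the second function as a.e. derivative. -/
def ACD (T : ℝ) (f f' : ℝ → ℝ) : Prop :=
  AbsolutelyContinuousOnInterval f 0 T ∧ ∀ᵐ x, x ∈ Ioo 0 T → HasDerivAt f (f' x) x

lemma ac_congr {f g : ℝ → ℝ} {a b : ℝ} (hf : AbsolutelyContinuousOnInterval f a b)
    (h : ∀ x ∈ uIcc a b, g x = f x) : AbsolutelyContinuousOnInterval g a b := by
  rw [absolutelyContinuousOnInterval_iff] at hf ⊢
  intro ε hε
  obtain ⟨δ, hδ, H⟩ := hf ε hε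
  refine ⟨δ, hδ, fun E hE hl => ?_⟩
  have := H E hE hl
  convert this using 1
  refine Finset.sum_congr rfl fun i hi => ?_
  rw [h _ (hE.1 i hi).1, h _ (hE.1 i hi).2]

lemma ac_comp {f F : ℝ → ℝ} {a b : ℝ} (hf : AbsolutelyContinuousOnInterval f a b)
    (hF : ContDiff ℝ 1 F) : AbsolutelyContinuousOnInterval (fun x => F (f x)) a b := by
  obtain ⟨C, hC⟩ := hf.exists_bound
  obtain ⟨K, hK⟩ := (hF.contDiffOn (s := Icc (-C) C)).exists_lipschitzOnWith (by decide)
    (convex_Icc _ _) isCompact_Icc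
  have hmem : ∀ x ∈ uIcc a b, f x ∈ Icc (-C) C := fun x hx => abs_le.1 (hC x hx)
  rw [absolutelyContinuousOnInterval_iff] at hf ⊢
  intro ε hε
  obtain ⟨δ, hδ, H⟩ := hf (ε / (K + 1)) (by positivity)
  refine ⟨δ, hδ, fun E hE hl => ?_⟩
  have := H E hE hl
  rw [lt_div_iff₀ (by positivity)] at this
  refine lt_of_le_of_lt ?_ this
  rw [Finset.sum_mul]
  refine Finset.sum_le_sum fun i hi => ?_
  have h1 := hK.dist_le_mul _ (hmem _ (hE.1 i hi).1) _ (hmem _ (hE.1 i hi).2)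
  have h2 : 0 ≤ dist (f (E.2 i).1) (f (E.2 i).2) := dist_nonneg
  nlinarith

lemma ACD.mul {T : ℝ} {f f' g g' : ℝ → ℝ} (hf : ACD T f f') (hg : ACD T g g') :
    ACD T (fun x => f x * g x) (fun x => f' x * g x + f x * g' x) := by
  refine ⟨hf.1.fun_mul hg.1, ?_⟩
  filter_upwards [hf.2, hg.2] with x h1 h2 hx
  exact (h1 hx).mul (h2 hx)

lemma ACD.add {T : ℝ} {f f' g g' : ℝ → ℝ} (hf : ACD T f f') (hg : ACD T g g') :
    ACD T (fun x => f x + g x) (fun x => f' x + g' x) := by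
  refine ⟨hf.1.fun_add hg.1, ?_⟩
  filter_upwards [hf.2, hg.2] with x h1 h2 hx
  exact (h1 hx).add (h2 hx)

lemma ACD.sub {T : ℝ} {f f' g g' : ℝ → ℝ} (hf : ACD T f f') (hg : ACD T g g') :
    ACD T (fun x => f x - g x) (fun x => f' x - g' x) := by
  refine ⟨hf.1.fun_sub hg.1, ?_⟩
  filter_upwards [hf.2, hg.2] with x h1 h2 hx
  exact (h1 hx).sub (h2 hx)

lemma ACD.comp {T : ℝ} {f f' F F' : ℝ → ℝ} (hf : ACD T f f') (hF : ContDiff ℝ 1 F)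
    (hF' : ∀ t, HasDerivAt F (F' t) t) :
    ACD T (fun x => F (f x)) (fun x => F' (f x) * f' x) := by
  refine ⟨ac_comp hf.1 hF, ?_⟩
  filter_upwards [hf.2] with x h1 hx
  exact (hF' (f x)).comp x (h1 hx)

lemma ACD.congr {T : ℝ} {f f' g' : ℝ → ℝ} (hf : ACD T f f')
    (h : ∀ᵐ x, x ∈ Ioo 0 T → g' x = f' x) : ACD T f g' := by
  refine ⟨hf.1, ?_⟩
  filter_upwards [hf.2, h] with x h1 h2 hx
  rw [h2 hx]; exact h1 hx

lemma ACD.integral {T : ℝ} (hT : 0 < T) {h : ℝ → ℝ} (hh : IntervalIntegrable h volume 0 T)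
    (c : ℝ) : ACD T (fun x => c + ∫ t in (0:ℝ)..x, h t) h := by
  refine ⟨?_, ?_⟩
  · have h1 := hh.absolutelyContinuousOnInterval_intervalIntegral (c := 0) (by simp)
    have h2 : AbsolutelyContinuousOnInterval (fun _ : ℝ => c) 0 T :=
      (contDiff_const.contDiffOn).absolutelyContinuousOnInterval
    exact h2.fun_add h1
  · filter_upwards [hh.ae_hasDerivAt_integral] with x hx hx'
    exact (hx (by rw [uIcc_of_le hT.le]; exact Ioo_subset_Icc_self hx') 0 (by simp)).const_add c

lemma ae_Ioc_of_Ioo {T : ℝ} {P : ℝ → Prop} (h : ∀ᵐ x, x ∈ Ioo 0 T → P x) :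
    ∀ᵐ x, x ∈ Icc 0 T → P x := by
  have h₁ : ∀ᵐ x : ℝ, x ≠ 0 := by simp [ae_iff, measure_singleton]
  have h₂ : ∀ᵐ x : ℝ, x ≠ T := by simp [ae_iff, measure_singleton]
  filter_upwards [h, h₁, h₂] with x h3 h4 h5 hx
  exact h3 ⟨lt_of_le_of_ne hx.1 (Ne.symm h4), lt_of_le_of_ne hx.2 h5⟩

lemma ACD.ftc {T : ℝ} {f f' : ℝ → ℝ} (hf : ACD T f f') {c d : ℝ} (hc : 0 ≤ c)
    (hcd : c ≤ d) (hd : d ≤ T) :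
    IntervalIntegrable f' volume c d ∧ ∫ x in c..d, f' x = f d - f c := by
  have hac : AbsolutelyContinuousOnInterval f c d := hf.1.mono (by
    rw [uIcc_of_le hcd, uIcc_of_le (by linarith)]; exact Icc_subset_Icc hc hd)
  have he : ∀ᵐ x, x ∈ uIoc c d → deriv f x = f' x := by
    filter_upwards [ae_Ioc_of_Ioo hf.2] with x hx hx'
    rw [uIoc_of_le hcd] at hx'
    exact (hx ⟨by linarith [hx'.1], by linarith [hx'.2]⟩).deriv
  refine ⟨hac.intervalIntegrable_deriv.congr_ae ?_, ?_⟩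
  · exact (ae_restrict_iff' measurableSet_uIoc).2 he
  · rw [← hac.integral_deriv_eq_sub]
    apply intervalIntegral.integral_congr_ae
    filter_upwards [he] with x hx hx'
    exact (hx hx').symm

lemma ACD.mono {T : ℝ} {f f' : ℝ → ℝ} (hf : ACD T f f')
    (h : ∀ᵐ x, x ∈ Ioo 0 T → 0 ≤ f' x) {c d : ℝ} (hc : 0 ≤ c)
    (hcd : c ≤ d) (hd : d ≤ T) : f c ≤ f d := by
  obtain ⟨h1, h2⟩ := hf.ftc hc hcd hd
  have : 0 ≤ ∫ x in c..d, f' x := by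
    apply intervalIntegral.integral_nonneg_of_ae_restrict hcd
    refine (ae_restrict_iff' measurableSet_Icc).2 ?_
    filter_upwards [ae_Ioc_of_Ioo h] with x hx hx'
    exact hx ⟨by linarith [hx'.1], by linarith [hx'.2]⟩
  linarith

lemma ACD.const {T : ℝ} {f f' : ℝ → ℝ} (hf : ACD T f f')
    (h : ∀ᵐ x, x ∈ Ioo 0 T → f' x = 0) {x : ℝ} (hx : x ∈ Icc 0 T) : f x = f 0 := by
  obtain ⟨h1, h2⟩ := hf.ftc le_rfl hx.1 hx.2
  have : ∫ t in (0:ℝ)..x, f' t = ∫ t in (0:ℝ)..x, (0:ℝ) := by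
    apply intervalIntegral.integral_congr_ae
    filter_upwards [ae_Ioc_of_Ioo h] with t ht ht'
    rw [uIoc_of_le hx.1] at ht'
    exact ht ⟨ht'.1.le, ht'.2.trans hx.2⟩
  rw [this] at h2
  simp at h2
  linarith

lemma ACD.cont {T : ℝ} (hT : 0 < T) {f f' : ℝ → ℝ} (hf : ACD T f f') :
    ContinuousOn f (Icc 0 T) := by
  have := hf.1.continuousOn
  rwa [uIcc_of_le hT.le] at this

lemma sol_acd {T : ℝ} (hT : 0 < T) {b u v : ℝ → ℝ} (hb : IntervalIntegrable b volume 0 T)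
    (h : IsSolOn b u v 0 T) : ACD T u v ∧ ACD T v (fun x => -(b x * u x)) := by
  obtain ⟨h1, h2⟩ := h
  have hu : ContinuousOn u (Icc 0 T) := fun x hx => (h1 x hx).continuousWithinAt
  have hbu : IntervalIntegrable (fun x => b x * u x) volume 0 T :=
    hb.mul_continuousOn (by rwa [uIcc_of_le hT.le])
  have hA := ACD.integral hT hbu.neg (v 0)
  have heq : ∀ x ∈ Icc 0 T, v x = v 0 + ∫ t in (0:ℝ)..x, (-fun x => b x * u x) t := by
    intro x hx
    rw [h2 x hx]
    simp [sub_eq_add_neg]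
  have hv : ACD T v (fun x => -(b x * u x)) := by
    refine ⟨ac_congr hA.1 (by rwa [uIcc_of_le hT.le]), ?_⟩
    filter_upwards [hA.2] with x hx hx'
    refine (hx hx').congr_of_eventuallyEq ?_
    filter_upwards [Ioo_mem_nhds hx'.1 hx'.2] with y hy
    exact heq y (Ioo_subset_Icc_self hy)
  refine ⟨⟨?_, ?_⟩, hv⟩
  · obtain ⟨C, hC⟩ := hv.1.exists_bound
    rw [uIcc_of_le hT.le] at hC
    have : LipschitzOnWith C.toNNReal u (Icc 0 T) := by
      refine (convex_Icc 0 T).lipschitzOnWith_of_nnnorm_hasDerivWithin_le h1 fun x hx => ?_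
      rw [← NNReal.coe_le_coe, coe_nnnorm]
      exact (hC x hx).trans (Real.le_coe_toNNReal C)
    rw [← uIcc_of_le hT.le] at this
    exact this.absolutelyContinuousOnInterval
  · refine Filter.Eventually.of_forall fun x hx => ?_
    exact (h1 x (Ioo_subset_Icc_self hx)).hasDerivAt (Icc_mem_nhds hx.1 hx.2)

lemma nonvanish {T ω : ℝ} (hT : 0 < T) {q u w : ℝ → ℝ}
    (hq : IntervalIntegrable q volume 0 T) (hq0 : ∀ᵐ x, x ∈ Ioo 0 T → 0 ≤ q x)
    (hu : ACD T u (fun x => ω * w x)) (hw : ACD T w (fun x => -((ω + q x) * u x)))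
    {x₀ : ℝ} (hx₀ : x₀ ∈ Icc 0 T) (hz : u x₀ * u x₀ + w x₀ * w x₀ = 0) :
    ∀ x ∈ Icc 0 T, u x = 0 := by
  have hR := (hu.mul hu).add (hw.mul hw)
  have hA := ACD.integral hT hq 0
  have hE := hA.comp Real.contDiff_exp Real.hasDerivAt_exp
  have hE' := hA.comp (F := fun t => Real.exp (-t)) (F' := fun t => -Real.exp (-t))
    (by fun_prop) (fun t => by simpa using (hasDerivAt_neg t).exp)
  have hM := hR.mul hE
  have hN := hR.mul hE'
  have key : ∀ x ∈ Icc 0 T, u x * u x + w x * w x ≤ 0 := by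
    intro x hx
    rcases le_total x x₀ with hxx | hxx
    · have := hM.mono ?_ hx.1 hxx hx₀.2
      · simp only [hz, zero_mul] at this
        exact le_of_mul_le_mul_right (by simpa using this) (Real.exp_pos _)
      · filter_upwards [hq0] with y hy hy'
        have h1 := mul_nonneg (mul_nonneg (hy hy') (sq_nonneg (u y - w y)))
          (Real.exp_pos (0 + ∫ t in (0:ℝ)..y, q t)).le
        linarith
    · have := (show ACD T _ _ from (ACD.integral hT (h := fun _ => 0) (by simp) 0).sub hN).mono
        ?_ hx₀.1 hxx hx.2
      · simp only [hz, zero_mul] at this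
        refine le_of_mul_le_mul_right ?_ (Real.exp_pos (-(0 + ∫ t in (0:ℝ)..x, q t)))
        simp at this ⊢
        linarith
      · filter_upwards [hq0] with y hy hy'
        have h1 := mul_nonneg (mul_nonneg (hy hy') (sq_nonneg (u y + w y)))
          (Real.exp_pos (-(0 + ∫ t in (0:ℝ)..y, q t))).le
        linarith
  intro x hx
  have := key x hx
  nlinarith [mul_self_nonneg (u x), mul_self_nonneg (w x)]

lemma pruefer {T ω : ℝ} (hT : 0 < T) {q u w : ℝ → ℝ}
    (hq : IntervalIntegrable q volume 0 T)
    (hu : ACD T u (fun x => ω * w x)) (hw : ACD T w (fun x => -((ω + q x) * u x)))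
    (hR : ∀ x ∈ Icc 0 T, 0 < u x * u x + w x * w x) (hu0 : u 0 = u T) (hw0 : w 0 = w T) :
    ∃ θ : ℝ → ℝ, ACD T θ (fun x => ω + q x * sin (θ x) ^ 2) ∧
      ∃ k : ℤ, θ T = θ 0 + k * (2 * π) := by
  have cu : ContinuousOn u (Icc 0 T) := hu.cont hT
  have cw : ContinuousOn w (Icc 0 T) := hw.cont hT
  have cR : ∀ x ∈ Icc 0 T, u x * u x + w x * w x ≠ 0 := fun x hx => (hR x hx).ne'
  have m0 : (0:ℝ) ∈ Icc 0 T := ⟨le_rfl, hT.le⟩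
  have mT : T ∈ Icc 0 T := ⟨hT.le, le_rfl⟩
  have iθ : IntervalIntegrable (fun x => ω + q x * (u x * u x / (u x * u x + w x * w x)))
      volume 0 T := by
    refine (by simp : IntervalIntegrable (fun _ : ℝ => ω) volume 0 T).add
      (hq.mul_continuousOn ?_)
    rw [uIcc_of_le hT.le]
    exact (cu.mul cu).div ((cu.mul cu).add (cw.mul cw)) cR
  have iρ : IntervalIntegrable (fun x => q x * (u x * w x / (u x * u x + w x * w x)))
      volume 0 T := by
    refine hq.mul_continuousOn ?_
    rw [uIcc_of_le hT.le]
    exact (cu.mul cw).div ((cu.mul cu).add (cw.mul cw)) cR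
  let z₀ : ℂ := ⟨w 0, u 0⟩
  have hz₀ : 0 < ‖z₀‖ := by
    rw [norm_pos_iff]
    intro h
    have h1 : w 0 = 0 := congrArg Complex.re h
    have h2 : u 0 = 0 := congrArg Complex.im h
    apply cR 0 m0
    rw [h1, h2]; ring
  have hc0 : w 0 = ‖z₀‖ * cos z₀.arg := (Complex.norm_mul_cos_arg z₀).symm
  have hs0 : u 0 = ‖z₀‖ * sin z₀.arg := (Complex.norm_mul_sin_arg z₀).symm
  have hθ := ACD.integral hT iθ z₀.arg
  set θ : ℝ → ℝ := fun x => z₀.arg + ∫ t in (0:ℝ)..x,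
    (ω + q t * (u t * u t / (u t * u t + w t * w t))) with hθd
  have hθ0 : θ 0 = z₀.arg := by simp [hθd]
  have hs := hθ.comp Real.contDiff_sin Real.hasDerivAt_sin
  have hc := hθ.comp Real.contDiff_cos Real.hasDerivAt_cos
  have hE := (ACD.integral hT iρ 0).comp Real.contDiff_exp Real.hasDerivAt_exp
  set E : ℝ → ℝ := fun x => Real.exp (0 + ∫ t in (0:ℝ)..x,
    (q t * (u t * w t / (u t * u t + w t * w t)))) with hEd
  have hE0 : E 0 = 1 := by simp [hEd]
  have hEp : ∀ x, 0 < E x := fun x => Real.exp_pos _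
  have hP := ((hu.mul hc).sub (hw.mul hs)).mul hE
  have hQ := ((hu.mul hs).add (hw.mul hc)).mul hE
  have hP0 : ∀ x ∈ Icc 0 T, u x * cos (θ x) - w x * sin (θ x) = 0 := by
    intro x hx
    have := hP.const ?_ hx
    · simp only [hE0, hθ0] at this
      have h2 : (u x * cos (θ x) - w x * sin (θ x)) * E x = 0 := by
        rw [this, hs0, hc0]; ring
      exact (mul_eq_zero.1 h2).resolve_right (hEp x).ne'
    · refine Filter.Eventually.of_forall fun y hy => ?_
      have h5 : u y ^ 2 + w y ^ 2 ≠ 0 := by simpa [sq] using cR y (Ioo_subset_Icc_self hy)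
      simp only [hEd]
      generalize Real.exp _ = e
      field_simp
      ring
  have hQ0 : ∀ x ∈ Icc 0 T, (u x * sin (θ x) + w x * cos (θ x)) * E x = ‖z₀‖ := by
    intro x hx
    have := hQ.const ?_ hx
    · simp only [hE0, hθ0] at this
      rw [this]
      rw [hs0, hc0]
      linear_combination ‖z₀‖ * sin_sq_add_cos_sq z₀.arg
    · refine Filter.Eventually.of_forall fun y hy => ?_
      have h5 : u y ^ 2 + w y ^ 2 ≠ 0 := by simpa [sq] using cR y (Ioo_subset_Icc_self hy)
      simp only [hEd]
      generalize Real.exp _ = e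
      field_simp
      ring
  set Q : ℝ → ℝ := fun x => u x * sin (θ x) + w x * cos (θ x) with hQd
  have hQp : ∀ x ∈ Icc 0 T, 0 < Q x := by
    intro x hx
    have := hQ0 x hx
    by_contra hcon
    push Not at hcon
    nlinarith [hEp x]
  have hus : ∀ x ∈ Icc 0 T, u x = Q x * sin (θ x) := by
    intro x hx
    simp only [hQd]
    linear_combination cos (θ x) * hP0 x hx - u x * sin_sq_add_cos_sq (θ x)
  have hwc : ∀ x ∈ Icc 0 T, w x = Q x * cos (θ x) := by
    intro x hx
    simp only [hQd]
    linear_combination - sin (θ x) * hP0 x hx - w x * sin_sq_add_cos_sq (θ x)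
  have hRQ : ∀ x ∈ Icc 0 T, u x * u x + w x * w x = Q x ^ 2 := by
    intro x hx
    rw [hus x hx, hwc x hx]
    linear_combination Q x ^ 2 * sin_sq_add_cos_sq (θ x)
  refine ⟨θ, hθ.congr ?_, ?_⟩
  · refine Filter.Eventually.of_forall fun y hy => ?_
    have hy := Ioo_subset_Icc_self hy
    have h3 := (hQp y hy).ne'
    rw [hRQ y hy, hus y hy]
    field_simp
  · have hQeq : Q T = Q 0 := by
      have h1 := hRQ T mT
      have h2 := hRQ 0 m0
      rw [← hu0, ← hw0, h2] at h1
      have := hQp T mT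
      have := hQp 0 m0
      exact (pow_left_inj₀ (by linarith) (by linarith) two_ne_zero).1 h1.symm
    have h3 := (hQp 0 m0).ne'
    have e1 : sin (θ T) = sin (θ 0) := by
      have := hus T mT
      rw [← hu0, hus 0 m0, hQeq] at this
      exact (mul_left_cancel₀ h3 this).symm
    have e2 : cos (θ T) = cos (θ 0) := by
      have := hwc T mT
      rw [← hw0, hwc 0 m0, hQeq] at this
      exact (mul_left_cancel₀ h3 this).symm
    have : ((θ T : ℝ) : Real.Angle) = (θ 0 : ℝ) := Real.Angle.cos_sin_inj e2 e1
    obtain ⟨k, hk⟩ := Real.Angle.angle_eq_iff_two_pi_dvd_sub.1 this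
    exact ⟨k, by linarith⟩

/-- The calibration function `min (1 / sin² t) (1 / sin² φ)`. -/
noncomputable def gcal (φ t : ℝ) : ℝ := 1 / max (sin t ^ 2) (sin φ ^ 2)

lemma gcal_cont {φ : ℝ} (hs : 0 < sin φ) : Continuous (gcal φ) := by
  unfold gcal
  refine continuous_const.div (by fun_prop) fun t => ?_
  have : 0 < max (sin t ^ 2) (sin φ ^ 2) := lt_max_of_lt_right (by positivity)
  exact this.ne'

lemma gcal_periodic (φ : ℝ) : Function.Periodic (gcal φ) π := by
  intro t
  simp [gcal, sin_add_pi]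

lemma gcal_integral {φ : ℝ} (h0 : 0 < φ) (h1 : φ < π / 2) :
    ∫ t in (0:ℝ)..π, gcal φ t = 2 * (φ / sin φ ^ 2 + cos φ / sin φ) := by
  have hs : 0 < sin φ := sin_pos_of_pos_of_lt_pi h0 (by linarith)
  have hi : ∀ a b, IntervalIntegrable (gcal φ) volume a b :=
    fun a b => (gcal_cont hs).intervalIntegrable a b
  rw [← intervalIntegral.integral_add_adjacent_intervals (hi 0 φ) (hi φ π),
    ← intervalIntegral.integral_add_adjacent_intervals (hi φ (π - φ)) (hi (π - φ) π)]
  have e1 : ∫ t in (0:ℝ)..φ, gcal φ t = ∫ t in (0:ℝ)..φ, 1 / sin φ ^ 2 := by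
    refine intervalIntegral.integral_congr fun t ht => ?_
    rw [uIcc_of_le h0.le] at ht
    have a1 : 0 ≤ sin t := sin_nonneg_of_nonneg_of_le_pi ht.1 (by linarith [ht.2])
    have a2 : sin t ≤ sin φ := sin_le_sin_of_le_of_le_pi_div_two (by linarith [ht.1]) h1.le ht.2
    simp only [gcal]
    rw [max_eq_right (by gcongr)]
  have e3 : ∫ t in (π - φ)..π, gcal φ t = ∫ t in (π - φ)..π, 1 / sin φ ^ 2 := by
    refine intervalIntegral.integral_congr fun t ht => ?_
    rw [uIcc_of_le (by linarith)] at ht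
    have a1 : 0 ≤ sin t := sin_nonneg_of_nonneg_of_le_pi (by linarith [ht.1]) ht.2
    have a2 : sin t ≤ sin φ := by
      rw [← sin_pi_sub t]
      exact sin_le_sin_of_le_of_le_pi_div_two (by linarith [ht.2]) h1.le (by linarith [ht.1])
    simp only [gcal]
    rw [max_eq_right (by gcongr)]
  have e2 : ∫ t in φ..(π - φ), gcal φ t = 2 * (cos φ / sin φ) := by
    have hd : ∀ t ∈ uIcc φ (π - φ), HasDerivAt (fun t => -(cos t / sin t)) (gcal φ t) t := by
      intro t ht
      rw [uIcc_of_le (by linarith)] at ht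
      have a1 : 0 < sin t := sin_pos_of_pos_of_lt_pi (by linarith [ht.1]) (by linarith [ht.2])
      have a2 : sin φ ≤ sin t := by
        rcases le_total t (π / 2) with h | h
        · exact sin_le_sin_of_le_of_le_pi_div_two (by linarith) h ht.1
        · rw [← sin_pi_sub t]
          exact sin_le_sin_of_le_of_le_pi_div_two (by linarith) (by linarith) (by linarith [ht.2])
      have := ((hasDerivAt_cos t).div (hasDerivAt_sin t) a1.ne').neg
      convert! this using 1
      simp only [gcal]
      rw [max_eq_left (by gcongr)]
      field_simp
      linarith [sin_sq_add_cos_sq t]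
    rw [intervalIntegral.integral_eq_sub_of_hasDerivAt hd (hi _ _)]
    rw [sin_pi_sub, cos_pi_sub]
    ring
  rw [e1, e2, e3, intervalIntegral.integral_const, intervalIntegral.integral_const]
  simp only [smul_eq_mul]
  ring

lemma core {T ω : ℝ} (hT : 0 < T) (hω : 0 < ω) {n : ℕ} (hn : 1 ≤ n)
    (hωT : ω * T = 2 * π * n) {q θ : ℝ → ℝ}
    (hq : IntervalIntegrable q volume 0 T) (hq0 : ∀ᵐ x, x ∈ Ioo 0 T → 0 ≤ q x)
    (hqp : 0 < volume {x ∈ Icc 0 T | 0 < q x})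
    (hθ : ACD T θ (fun x => ω + q x * sin (θ x) ^ 2)) (k : ℤ)
    (hk : θ T = θ 0 + k * (2 * π)) :
    4 * ((n : ℝ) + 1) * Real.cot ((n : ℝ) * π / (2 * ((n : ℝ) + 1))) < ∫ x in (0:ℝ)..T, q x := by
  have hn' : (1:ℝ) ≤ n := by exact_mod_cast hn
  have hπ := Real.pi_pos
  have cθ : ContinuousOn θ (Icc 0 T) := hθ.cont hT
  have cs : ContinuousOn (fun x => sin (θ x) ^ 2) (Icc 0 T) := by fun_prop
  have hq0' := ae_Ioc_of_Ioo hq0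
  have iqs : IntervalIntegrable (fun x => q x * sin (θ x) ^ 2) volume 0 T :=
    hq.mul_continuousOn (by rwa [uIcc_of_le hT.le])
  have ic : ∀ c : ℝ, IntervalIntegrable (fun _ : ℝ => c) volume 0 T := fun c => by simp
  -- the rotation number exceeds `n`
  have hinj : InjOn θ (Icc 0 T) := by
    have hlin := hθ.sub ((ACD.integral hT (ic ω) 0))
    have hmono : ∀ x ∈ Icc 0 T, ∀ y ∈ Icc 0 T, x < y → θ x < θ y := by
      intro x hx y hy hxy
      have := hlin.mono (by
        filter_upwards [hq0] with t ht ht'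
        have := mul_nonneg (ht ht') (sq_nonneg (sin (θ t)))
        linarith) hx.1 hxy.le hy.2
      simp at this
      nlinarith
    intro x hx y hy hxy
    rcases lt_trichotomy x y with h | h | h
    · exact absurd hxy (hmono x hx y hy h).ne
    · exact h
    · exact absurd hxy (hmono y hy x hx h).ne'
  have hcount : ({x ∈ Icc 0 T | sin (θ x) = 0} ∪ {0}).Countable := by
    refine Countable.union ?_ (countable_singleton 0)
    have hr : (range fun m : ℤ => (m : ℝ) * π).Countable := countable_range _
    refine MapsTo.countable_of_injOn (f := θ) (t := range fun m : ℤ => (m : ℝ) * π) ?_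
      (hinj.mono fun x hx => hx.1) hr
    intro x hx
    exact Real.sin_eq_zero_iff.1 hx.2
  have hpos : 0 < ∫ x in (0:ℝ)..T, q x * sin (θ x) ^ 2 := by
    rw [intervalIntegral.integral_pos_iff_support_of_nonneg_ae' _ iqs]
    · refine ⟨hT, ?_⟩
      rw [← measure_sdiff_null (hcount.measure_zero volume)] at hqp
      refine hqp.trans_le (measure_mono ?_)
      rintro x ⟨⟨hx, hx1⟩, hx2⟩
      simp only [mem_union, mem_ofPred_eq, mem_singleton_iff, not_or, not_and] at hx2
      refine ⟨?_, lt_of_le_of_ne hx.1 (Ne.symm hx2.2), hx.2⟩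
      have := hx2.1 hx
      simp [this, hx1.ne']
    · rw [uIoc_of_le hT.le]
      refine (ae_restrict_iff' measurableSet_Ioc).2 ?_
      filter_upwards [hq0'] with x hx hx'
      exact mul_nonneg (hx ⟨hx'.1.le, hx'.2⟩) (sq_nonneg _)
  have hkn : (n : ℝ) + 1 ≤ k := by
    have h1 := (hθ.ftc le_rfl hT.le le_rfl).2
    rw [intervalIntegral.integral_add (ic ω) iqs, hk] at h1
    simp only [intervalIntegral.integral_const, smul_eq_mul] at h1
    have h2 : 2 * π * (n : ℝ) < 2 * π * k := by nlinarith
    have h3 : (n : ℝ) < k := lt_of_mul_lt_mul_left h2 (by positivity)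
    have h4 : (n : ℤ) < k := by exact_mod_cast h3
    exact_mod_cast Int.add_one_le_iff.2 h4
  -- calibration
  set φ : ℝ := (n : ℝ) * π / (2 * ((n : ℝ) + 1)) with hφ
  have hφ0 : 0 < φ := by positivity
  have hφ1 : φ < π / 2 := by
    rw [hφ, div_lt_div_iff₀ (by positivity) (by norm_num)]
    nlinarith
  have hs : 0 < sin φ := sin_pos_of_pos_of_lt_pi hφ0 (by linarith)
  have hs1 : sin φ ^ 2 < 1 := by
    have := cos_pos_of_mem_Ioo (x := φ) ⟨by linarith, hφ1⟩
    nlinarith [sin_sq_add_cos_sq φ]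
  have hgc := gcal_cont hs
  have hgi : ∀ a b, IntervalIntegrable (gcal φ) volume a b :=
    fun a b => hgc.intervalIntegrable a b
  have hGd : ∀ t, HasDerivAt (fun t => ∫ y in (0:ℝ)..t, gcal φ y) (gcal φ t) t := fun t =>
    intervalIntegral.integral_hasDerivAt_right (hgi 0 t)
      (hgc.stronglyMeasurableAtFilter _ _) hgc.continuousAt
  have hG1 : ContDiff ℝ 1 (fun t => ∫ y in (0:ℝ)..t, gcal φ y) := by
    rw [contDiff_one_iff_deriv]
    refine ⟨fun t => (hGd t).differentiableAt, ?_⟩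
    have : deriv (fun t => ∫ y in (0:ℝ)..t, gcal φ y) = gcal φ := funext fun t => (hGd t).deriv
    rwa [this]
  obtain ⟨iH, eH⟩ := (hθ.comp hG1 hGd).ftc le_rfl hT.le le_rfl
  have eG : ∫ x in (0:ℝ)..T, gcal φ (θ x) * (ω + q x * sin (θ x) ^ 2)
      = 2 * k * (2 * (φ / sin φ ^ 2 + cos φ / sin φ)) := by
    rw [eH, intervalIntegral.integral_interval_sub_left (hgi _ _) (hgi _ _), hk]
    have := (gcal_periodic φ).intervalIntegral_add_zsmul_eq (2 * k) (θ 0) hgi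
    rw [(gcal_periodic φ).intervalIntegral_add_eq (θ 0) 0, zero_add, gcal_integral hφ0 hφ1] at this
    simp only [zsmul_eq_mul] at this
    push_cast at this
    rw [← this]
    congr 1
    ring
  have cg : ContinuousOn (fun x => ω * (1 / sin φ ^ 2 - gcal φ (θ x))) (Icc 0 T) :=
    continuousOn_const.mul (continuousOn_const.sub (hgc.comp_continuousOn cθ))
  have gle : ∀ t, gcal φ t ≤ 1 / sin φ ^ 2 := fun t => by
    unfold gcal
    exact one_div_le_one_div_of_le (by positivity) (le_max_right _ _)
  have gs : ∀ t, gcal φ t * sin t ^ 2 ≤ 1 := fun t => by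
    unfold gcal
    rw [one_div, inv_mul_le_iff₀ (lt_max_of_lt_right (by positivity)), mul_one]
    exact le_max_left _ _
  have hstrict : 0 < ∫ x in (0:ℝ)..T, ω * (1 / sin φ ^ 2 - gcal φ (θ x)) := by
    refine intervalIntegral.integral_pos hT cg
      (fun x _ => mul_nonneg hω.le (by linarith [gle (θ x)])) ?_
    set m : ℤ := ⌈(θ 0 - π / 2) / π⌉ with hm
    have m1 : θ 0 ≤ m * π + π / 2 := by
      have := Int.le_ceil ((θ 0 - π / 2) / π)
      rw [div_le_iff₀ hπ] at this
      linarith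
    have m2 : m * π + π / 2 ≤ θ T := by
      have := (Int.ceil_lt_add_one ((θ 0 - π / 2) / π)).le
      have h2 : (m : ℝ) * π ≤ ((θ 0 - π / 2) / π + 1) * π :=
        mul_le_mul_of_nonneg_right this hπ.le
      have h3 : ((θ 0 - π / 2) / π + 1) * π = θ 0 - π / 2 + π := by field_simp
      rw [hk]
      nlinarith
    obtain ⟨c, hc, hc'⟩ := intermediate_value_Icc hT.le cθ ⟨m1, m2⟩
    refine ⟨c, hc, mul_pos hω ?_⟩
    have h1 : sin (θ c) ^ 2 = 1 := by
      rw [hc', sin_add_pi_div_two]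
      have := sin_sq_add_cos_sq ((m : ℝ) * π)
      rw [sin_int_mul_pi] at this
      linarith
    simp only [gcal]
    rw [h1, max_eq_left hs1.le]
    rw [sub_pos]
    exact one_div_lt_one_div_of_lt (by positivity) hs1
  have icg : IntervalIntegrable (fun x => ω * (1 / sin φ ^ 2 - gcal φ (θ x))) volume 0 T :=
    ContinuousOn.intervalIntegrable (by rwa [uIcc_of_le hT.le])
  have hmain : ∫ x in (0:ℝ)..T, ω * (1 / sin φ ^ 2 - gcal φ (θ x)) ≤
      ∫ x in (0:ℝ)..T, (q x - gcal φ (θ x) * (ω + q x * sin (θ x) ^ 2) + ω / sin φ ^ 2) := by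
    refine intervalIntegral.integral_mono_ae_restrict hT.le icg ((hq.sub iH).add (ic _)) ?_
    refine (ae_restrict_iff' measurableSet_Icc).2 ?_
    filter_upwards [hq0'] with x hx hx'
    have h1 := mul_nonneg (hx hx') (sub_nonneg.2 (gs (θ x)))
    have h2 : ω / sin φ ^ 2 = ω * (1 / sin φ ^ 2) := by ring
    rw [h2]
    linarith
  rw [intervalIntegral.integral_add (hq.sub iH) (ic _), intervalIntegral.integral_sub hq iH,
    eG, intervalIntegral.integral_const] at hmain
  simp only [smul_eq_mul, sub_zero] at hmain
  have hcot : Real.cot φ = cos φ / sin φ := Real.cot_eq_cos_div_sin φ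
  rw [hcot]
  have hcos := cos_pos_of_mem_Ioo (x := φ) ⟨by linarith, hφ1⟩
  have hI : 0 ≤ 2 * (φ / sin φ ^ 2 + cos φ / sin φ) := by positivity
  have h7 := mul_le_mul_of_nonneg_right (mul_le_mul_of_nonneg_left hkn zero_le_two) hI
  have h8 : 4 * ((n : ℝ) + 1) * φ = ω * T := by
    rw [hωT, hφ]; field_simp; ring
  have h9 : 4 * ((n : ℝ) + 1) * (φ / sin φ ^ 2) = T * (ω / sin φ ^ 2) := by
    rw [← mul_div_assoc, h8]; ring
  linarith

theorem stmt7 (T : ℝ) (hT : 0 < T) (n : ℕ) (hn : 1 ≤ n)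
    (a : ℝ → ℝ) (hLT : MemLT T a)
    (hprec : Prec T (fun _ => lam T n) a)
    (hnorm : (∫ x in (0:ℝ)..T, |a x - lam T n|) ≤ beta1 T n) :
    ∀ ε : ℝ, ε ∈ Set.Ioc (0:ℝ) 1 →
      ∀ u v : ℝ → ℝ, PeriodicSol T (fun x => lam T n + ε * (a x - lam T n)) u v →
        ∀ x ∈ Set.Icc 0 T, u x = 0 := by
  intro ε hε u v hsol
  obtain ⟨hsol, hu0, hv0⟩ := hsol
  have hn' : (1:ℝ) ≤ n := by exact_mod_cast hn
  have hπ := Real.pi_pos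
  set ω : ℝ := 2 * n * π / T with hωd
  have hω : 0 < ω := by positivity
  have hlam : lam T n = ω ^ 2 := by
    rw [lam, hωd]; ring
  have ia : IntervalIntegrable a volume 0 T := by
    rw [intervalIntegrable_iff_integrableOn_Icc_of_le hT.le]
    exact hLT.2.2
  have ic : ∀ c : ℝ, IntervalIntegrable (fun _ : ℝ => c) volume 0 T := fun c => by simp
  have ip : IntervalIntegrable (fun x => ε * (a x - lam T n)) volume 0 T :=
    (ia.sub (ic _)).const_mul ε
  set q : ℝ → ℝ := fun x => ε * (a x - lam T n) / ω with hqd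
  have iq : IntervalIntegrable q volume 0 T := ip.div_const ω
  have hae : ∀ᵐ x, x ∈ Icc 0 T → lam T n ≤ a x :=
    (ae_restrict_iff' measurableSet_Icc).1 hprec.1
  have hq0 : ∀ᵐ x, x ∈ Ioo 0 T → 0 ≤ q x := by
    filter_upwards [hae] with x hx hx'
    have := sub_nonneg.2 (hx (Ioo_subset_Icc_self hx'))
    have := hε.1
    simp only [hqd]
    positivity
  have hqp : 0 < volume {x ∈ Icc 0 T | 0 < q x} := by
    refine hprec.2.trans_le (measure_mono ?_)
    rintro x ⟨hx, hx'⟩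
    refine ⟨hx, ?_⟩
    exact div_pos (mul_pos hε.1 (sub_pos.2 hx')) hω
  obtain ⟨hu, hv⟩ := sol_acd hT ((ic (lam T n)).add ip) hsol
  have hu' : ACD T u (fun x => ω * (ω⁻¹ * v x)) :=
    hu.congr (Filter.Eventually.of_forall fun x _ => by field_simp)
  have hw : ACD T (fun x => ω⁻¹ * v x) (fun x => -((ω + q x) * u x)) := by
    refine ⟨hv.1.const_mul ω⁻¹, ?_⟩
    filter_upwards [hv.2] with x hx hx'
    convert! (hx hx').const_mul ω⁻¹ using 1
    simp only [hqd, hlam]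
    field_simp
  by_contra hcon
  have hR : ∀ x ∈ Icc 0 T, 0 < u x * u x + (ω⁻¹ * v x) * (ω⁻¹ * v x) := by
    intro x hx
    refine lt_of_le_of_ne (add_nonneg (mul_self_nonneg _) (mul_self_nonneg _)) fun h => ?_
    exact hcon (nonvanish hT iq hq0 hu' hw hx h.symm)
  obtain ⟨θ, hθ, k, hk⟩ := pruefer hT iq hu' hw hR hu0 (by simp only [hv0])
  have hlt := core hT hω hn (by rw [hωd]; field_simp) iq hq0 hqp hθ k hk
  have hqi : ∫ x in (0:ℝ)..T, q x = ε * (∫ x in (0:ℝ)..T, |a x - lam T n|) / ω := by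
    simp only [hqd]
    rw [intervalIntegral.integral_div, intervalIntegral.integral_const_mul]
    congr 2
    refine intervalIntegral.integral_congr_ae ?_
    filter_upwards [hae] with x hx hx'
    rw [uIoc_of_le hT.le] at hx'
    rw [abs_of_nonneg (sub_nonneg.2 (hx ⟨hx'.1.le, hx'.2⟩))]
  have hnn : 0 ≤ ∫ x in (0:ℝ)..T, |a x - lam T n| :=
    intervalIntegral.integral_nonneg hT.le fun x _ => abs_nonneg _
  have hb : beta1 T n = 4 * ((n : ℝ) + 1) * Real.cot ((n : ℝ) * π / (2 * ((n : ℝ) + 1))) * ω := by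
    rw [beta1, hωd]; ring
  rw [hqi, lt_div_iff₀ hω, ← hb] at hlt
  have := mul_le_mul_of_nonneg_right hε.2 hnn
  linarith
end

section
/- Let n ≥ 1 be a natural number, let a ∈ Λ̃_n, and let u be a nontrivial solution of the antiperiodic problem u'' + a(x)u = 0 on (0,T), u(0) + u(T) = 0, u'(0) + u'(T) = 0, normalized so that u(0) = u(T) = 0. Then the set of zeros of u in [0,T) is finite, its cardinality m is an odd number, and m ≥ 2n+1. Moreover, if x < y are a zero of u and a zero of u' (in either order) with no zero of u or of u' strictly between them, then y − x ≤ T/(2(2n−1)). -/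
open MeasureTheory Set Real

open Filter Topology

lemma sol_contU {a u v : ℝ → ℝ} {T : ℝ} (h : IsSolOn a u v 0 T) : ContinuousOn u (Icc 0 T) :=
  fun x hx => (h.1 x hx).continuousWithinAt

lemma sol_int {a u v : ℝ → ℝ} {T : ℝ} (hT : 0 < T) (h : IsSolOn a u v 0 T)
    (ha : IntegrableOn a (Icc 0 T)) : IntervalIntegrable (fun t => a t * u t) volume 0 T := by
  have h1 : IntervalIntegrable a volume 0 T :=
    (intervalIntegrable_iff_integrableOn_Icc_of_le hT.le).2 ha
  exact h1.mul_continuousOn (by rw [uIcc_of_le hT.le]; exact sol_contU h)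

lemma sol_V_ac {a u v : ℝ → ℝ} {T : ℝ} (hT : 0 < T) (h : IsSolOn a u v 0 T)
    (ha : IntegrableOn a (Icc 0 T)) :
    AbsolutelyContinuousOnInterval v 0 T := by
  have h1 := (sol_int hT h ha).absolutelyContinuousOnInterval_intervalIntegral (c := 0) (by simp)
  have h2 : AbsolutelyContinuousOnInterval (fun _ : ℝ => v 0) 0 T :=
    (contDiff_const (n := 1)).contDiffOn.absolutelyContinuousOnInterval
  have h3 := h2.sub h1
  rw [absolutelyContinuousOnInterval_iff] at h3 ⊢
  intro ε hε
  obtain ⟨δ, hδ, hh⟩ := h3 ε hε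
  refine ⟨δ, hδ, fun E hE hl => ?_⟩
  have := hh E hE hl
  refine lt_of_eq_of_lt (Finset.sum_congr rfl fun i hi => ?_) this
  have hm := hE.1 i hi
  rw [uIcc_of_le hT.le] at hm
  simp only [Pi.sub_apply]
  rw [h.2 _ hm.1, h.2 _ hm.2]

lemma sol_contV {a u v : ℝ → ℝ} {T : ℝ} (hT : 0 < T) (h : IsSolOn a u v 0 T)
    (ha : IntegrableOn a (Icc 0 T)) : ContinuousOn v (Icc 0 T) := by
  have := (sol_V_ac hT h ha).continuousOn
  rwa [uIcc_of_le hT.le] at this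

lemma sol_derivV {a u v : ℝ → ℝ} {T : ℝ} (hT : 0 < T) (h : IsSolOn a u v 0 T)
    (ha : IntegrableOn a (Icc 0 T)) :
    ∀ᵐ x, x ∈ Ioo 0 T → deriv v x = - (a x * u x) := by
  filter_upwards [(sol_int hT h ha).ae_hasDerivAt_integral] with x hx hx'
  have hd := hx (by rw [uIcc_of_le hT.le]; exact Ioo_subset_Icc_self hx') 0 (by simp)
  have h2 : HasDerivAt v (-(a x * u x)) x := by
    refine (hd.const_sub (v 0)).congr_of_eventuallyEq ?_
    filter_upwards [Icc_mem_nhds hx'.1 hx'.2] with y hy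
    exact h.2 y hy
  exact h2.deriv

lemma sol_derivU {a u v : ℝ → ℝ} {T : ℝ} (h : IsSolOn a u v 0 T) {x : ℝ} (hx : x ∈ Ioo 0 T) :
    HasDerivAt u (v x) x :=
  (h.1 x (Ioo_subset_Icc_self hx)).hasDerivAt (Icc_mem_nhds hx.1 hx.2)

lemma wronsk {a u v : ℝ → ℝ} {T : ℝ} (hT : 0 < T) (h : IsSolOn a u v 0 T)
    (ha : IntegrableOn a (Icc 0 T)) (w φ p r : ℝ) (hp : 0 ≤ p) (hpr : p ≤ r) (hr : r ≤ T) :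
    ∫ x in p..r, (a x - w ^ 2) * u x * sin (w * x + φ) =
      (u r * (w * cos (w * r + φ)) - v r * sin (w * r + φ)) -
      (u p * (w * cos (w * p + φ)) - v p * sin (w * p + φ)) := by
  have hsub : Icc p r ⊆ Icc 0 T := Icc_subset_Icc hp hr
  have hs : ∀ x, HasDerivAt (fun x => sin (w * x + φ)) (w * cos (w * x + φ)) x := by
    intro x
    have := ((((hasDerivAt_id x).const_mul w).add_const φ).sin)
    simpa [mul_comm] using this
  have hc : ∀ x, HasDerivAt (fun x => w * cos (w * x + φ)) (-(w ^ 2 * sin (w * x + φ))) x := by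
    intro x
    have := ((((hasDerivAt_id x).const_mul w).add_const φ).cos).const_mul w
    refine HasDerivAt.congr_deriv (f := fun x => w * cos (w * x + φ)) this ?_
    simp only [id, mul_one]
    ring
  have cu : ContinuousOn u (uIcc p r) := by
    rw [uIcc_of_le hpr]; exact (sol_contU h).mono hsub
  have cv : ContinuousOn v (uIcc p r) := by
    rw [uIcc_of_le hpr]; exact (sol_contV hT h ha).mono hsub
  have iau : IntervalIntegrable (fun t => a t * u t) volume p r :=
    (sol_int hT h ha).mono_set (by rw [uIcc_of_le hpr, uIcc_of_le hT.le]; exact hsub)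
  have acv : AbsolutelyContinuousOnInterval v p r := (sol_V_ac hT h ha).mono
    (by rw [uIcc_of_le hpr, uIcc_of_le hT.le]; exact hsub)
  have acs : AbsolutelyContinuousOnInterval (fun x => sin (w * x + φ)) p r := by
    apply ContDiffOn.absolutelyContinuousOnInterval
    apply ContDiff.contDiffOn
    fun_prop
  have e1 := acv.integral_deriv_mul_eq_sub acs
  have e1' : ∫ x in p..r, (-(a x * u x) * sin (w * x + φ) + v x * (w * cos (w * x + φ))) =
      v r * sin (w * r + φ) - v p * sin (w * p + φ) := by
    rw [← e1]
    apply intervalIntegral.integral_congr_ae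
    have hne : ∀ᵐ x : ℝ, x ≠ r := by simp [ae_iff, measure_singleton]
    filter_upwards [sol_derivV hT h ha, hne] with x hx hxr hx'
    rw [uIoc_of_le hpr] at hx'
    rw [hx ⟨hp.trans_lt hx'.1, lt_of_lt_of_le (lt_of_le_of_ne hx'.2 hxr) hr⟩, (hs x).deriv]
  have i2 : IntervalIntegrable (fun x => v x * (w * cos (w * x + φ)) +
      u x * (-(w ^ 2 * sin (w * x + φ)))) volume p r := by
    apply ContinuousOn.intervalIntegrable
    fun_prop
  have i1 : IntervalIntegrable (fun x => -(a x * u x) * sin (w * x + φ) +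
      v x * (w * cos (w * x + φ))) volume p r := by
    apply (iau.neg.mul_continuousOn (by fun_prop)).add
    apply ContinuousOn.intervalIntegrable
    fun_prop
  have e2 : ∫ x in p..r, (v x * (w * cos (w * x + φ)) +
      u x * (-(w ^ 2 * sin (w * x + φ)))) =
      u r * (w * cos (w * r + φ)) - u p * (w * cos (w * p + φ)) := by
    refine intervalIntegral.integral_eq_sub_of_hasDerivAt_of_le hpr
      (f := fun x => u x * (w * cos (w * x + φ))) ?_ ?_ i2
    · rw [uIcc_of_le hpr] at cu; fun_prop
    · intro x hx
      exact (sol_derivU h ⟨hp.trans_lt hx.1, hx.2.trans_le hr⟩).mul (hc x)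
  have e3 := intervalIntegral.integral_sub i2 i1
  rw [e1', e2] at e3
  have : ∀ x, (a x - w ^ 2) * u x * sin (w * x + φ) = (v x * (w * cos (w * x + φ)) +
      u x * (-(w ^ 2 * sin (w * x + φ)))) - (-(a x * u x) * sin (w * x + φ) +
      v x * (w * cos (w * x + φ))) := by intro x; ring
  simp_rw [this]
  rw [e3]; ring

lemma sol_local {a u v : ℝ → ℝ} {T : ℝ} (hT : 0 < T) (h : IsSolOn a u v 0 T)
    (ha : IntegrableOn a (Icc 0 T)) {c : ℝ} (hc : c ∈ Icc 0 T) (hu : u c = 0) (hv : v c = 0) :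
    ∃ δ > 0, ∀ x ∈ Icc 0 T, |x - c| ≤ δ → u x = 0 ∧ v x = 0 := by
  have hI : IntervalIntegrable (fun t => 1 + |a t|) volume 0 T := by
    have h1 : IntervalIntegrable a volume 0 T :=
      (intervalIntegrable_iff_integrableOn_Icc_of_le hT.le).2 ha
    exact intervalIntegrable_const.add h1.abs
  have sub : ∀ {x y : ℝ}, x ∈ Icc 0 T → y ∈ Icc 0 T → uIcc x y ⊆ uIcc 0 T := by
    intro x y hx hy
    rw [uIcc_of_le hT.le]
    exact uIcc_subset_Icc hx hy
  have hK := (hI.absolutelyContinuousOnInterval_intervalIntegral (c := c)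
    (by rwa [uIcc_of_le hT.le])).continuousOn
  rw [uIcc_of_le hT.le] at hK
  obtain ⟨δ, hδ, hh⟩ := Metric.continuousOn_iff.1 hK c hc (1/2) (by norm_num)
  refine ⟨δ/2, by positivity, ?_⟩
  set J := Icc (max 0 (c - δ/2)) (min T (c + δ/2)) with hJ
  have hJ0 : ∀ {x}, x ∈ J ↔ x ∈ Icc 0 T ∧ |x - c| ≤ δ/2 := by
    intro x
    rw [hJ, abs_le]
    simp only [mem_Icc, max_le_iff, le_min_iff]
    constructor
    · rintro ⟨⟨h1, h2⟩, h3, h4⟩; exact ⟨⟨h1, h3⟩, by linarith, by linarith⟩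
    · rintro ⟨⟨h1, h3⟩, h2, h4⟩; exact ⟨⟨h1, by linarith⟩, h3, by linarith⟩
  have cJ : c ∈ J := hJ0.2 ⟨hc, by simp; positivity⟩
  have cu := sol_contU h
  have cv := sol_contV hT h ha
  have cf : ContinuousOn (fun x => |u x| + |v x|) J := by
    have : ContinuousOn (fun x => |u x| + |v x|) (Icc 0 T) := by fun_prop
    exact this.mono fun x hx => (hJ0.1 hx).1
  obtain ⟨z, hz, hmax⟩ := isCompact_Icc.exists_isMaxOn ⟨c, cJ⟩ cf
  have hz' := hJ0.1 hz
  set M := |u z| + |v z| with hM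
  have hM0 : 0 ≤ M := by positivity
  have hsub := sub hc hz'.1
  have hsubJ : ∀ t ∈ uIcc c z, t ∈ J := fun t ht =>
    (uIcc_subset_Icc cJ hz) ht
  have ev : ∫ t in c..z, v t = u z := by
    have := intervalIntegral.integral_eq_sub_of_hasDeriv_right (f := u) (f' := v) (a := c) (b := z)
      (cu.mono (by rw [uIcc_of_le hT.le] at hsub; exact hsub)) ?_ ?_
    · rw [this, hu, sub_zero]
    · intro x hx
      have h1 : c ⊓ z < x := hx.1
      have h2 : x < c ⊔ z := hx.2
      refine (sol_derivU h ⟨?_, ?_⟩).hasDerivWithinAt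
      · exact lt_of_le_of_lt (le_min hc.1 hz'.1.1) h1
      · exact h2.trans_le (max_le hc.2 hz'.1.2)
    · apply ContinuousOn.intervalIntegrable
      exact cv.mono (by rw [uIcc_of_le hT.le] at hsub; exact hsub)
  have Iau := sol_int hT h ha
  have ea : ∫ t in c..z, a t * u t = - v z := by
    have h0 : (0:ℝ) ∈ Icc 0 T := ⟨le_rfl, hT.le⟩
    have e := intervalIntegral.integral_add_adjacent_intervals
      (Iau.mono_set (sub h0 hc)) (Iau.mono_set (sub hc hz'.1))
    have e1 := h.2 c hc
    have e2 := h.2 z hz'.1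
    linarith
  have hsubo : ∀ t ∈ uIoc c z, t ∈ J := fun t ht => hsubJ t (uIoc_subset_uIcc ht)
  have hbd : ‖(∫ t in c..z, |v t|+ |a t * u t|)‖ ≤ |∫ t in c..z, M * (1 + |a t|)| := by
    apply intervalIntegral.norm_integral_le_abs_of_norm_le
    · filter_upwards [ae_restrict_mem measurableSet_uIoc] with t ht
      have hm : |u t| + |v t| ≤ M := hmax (hsubo t ht)
      rw [Real.norm_eq_abs, abs_of_nonneg (by positivity), abs_mul]
      have h1 : |v t| ≤ M := by linarith [abs_nonneg (u t)]
      have h2 : |u t| ≤ M := by linarith [abs_nonneg (v t)]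
      nlinarith [abs_nonneg (a t)]
    · exact (hI.mono_set hsub).const_mul M
  have hKz := hh z hz'.1 (by rw [Real.dist_eq]; linarith [hz'.2])
  rw [intervalIntegral.integral_same, Real.dist_eq, sub_zero] at hKz
  rw [intervalIntegral.integral_const_mul, abs_mul, abs_of_nonneg hM0] at hbd
  have iv : IntervalIntegrable v volume c z := by
    apply ContinuousOn.intervalIntegrable
    exact cv.mono (by rw [uIcc_of_le hT.le] at hsub; exact hsub)
  have iau := Iau.mono_set hsub
  rw [intervalIntegral.integral_add iv.abs iau.abs] at hbd
  have b1 : |u z| ≤ |(∫ t in c..z, |v t|)| := by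
    rw [← ev]; simpa using intervalIntegral.norm_integral_le_abs_integral_norm (f := v) (a := c) (b := z) (μ := volume)
  have b2 : |v z| ≤ |(∫ t in c..z, |a t * u t|)| := by
    rw [← abs_neg, ← ea]
    exact intervalIntegral.norm_integral_le_abs_integral_norm (f := fun t => a t * u t) (a := c) (b := z) (μ := volume)
  have b3 : |(∫ t in c..z, |v t|)| + |(∫ t in c..z, |a t * u t|)| ≤
      |(∫ t in c..z, |v t|) + (∫ t in c..z, |a t * u t|)| := by
    rcases le_total c z with hcz | hcz
    · rw [abs_of_nonneg, abs_of_nonneg, abs_of_nonneg]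
      · apply add_nonneg <;> exact intervalIntegral.integral_nonneg hcz fun _ _ => abs_nonneg _
      all_goals exact intervalIntegral.integral_nonneg hcz fun _ _ => abs_nonneg _
    · rw [intervalIntegral.integral_symm, intervalIntegral.integral_symm z c, ← neg_add, abs_neg,
        abs_neg, abs_neg]
      rw [abs_of_nonneg, abs_of_nonneg, abs_of_nonneg]
      · apply add_nonneg <;> exact intervalIntegral.integral_nonneg hcz fun _ _ => abs_nonneg _
      all_goals exact intervalIntegral.integral_nonneg hcz fun _ _ => abs_nonneg _
  rw [Real.norm_eq_abs] at hbd
  have hM2 : M ≤ M * (1/2) := by nlinarith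
  have hMz : M = 0 := by linarith
  intro x hx hxc
  have : |u x| + |v x| ≤ M := hmax (hJ0.2 ⟨hx, hxc⟩)
  have h1 := abs_nonneg (u x)
  have h2 := abs_nonneg (v x)
  exact ⟨abs_eq_zero.1 (by linarith), abs_eq_zero.1 (by linarith)⟩

lemma sol_unique {a u v : ℝ → ℝ} {T : ℝ} (hT : 0 < T) (h : IsSolOn a u v 0 T)
    (ha : IntegrableOn a (Icc 0 T)) (hnt : ∃ x ∈ Icc 0 T, u x ≠ 0)
    {c : ℝ} (hc : c ∈ Icc 0 T) (hu : u c = 0) : v c ≠ 0 := by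
  intro hv
  let S : Set (Icc 0 T) := {x | u x = 0 ∧ v x = 0}
  have cu := (sol_contU h).domRestrict
  have cv := (sol_contV hT h ha).domRestrict
  have hcl : IsClosed S := (isClosed_eq cu continuous_const).inter (isClosed_eq cv continuous_const)
  have hop : IsOpen S := by
    rw [Metric.isOpen_iff]
    rintro ⟨x, hx⟩ ⟨h1, h2⟩
    obtain ⟨δ, hδ, hh⟩ := sol_local hT h ha hx h1 h2
    refine ⟨δ, hδ, ?_⟩
    rintro ⟨y, hy⟩ hyx
    exact hh y hy (le_of_lt hyx)
  have : PreconnectedSpace (Icc 0 T) := Subtype.preconnectedSpace isPreconnected_Icc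
  have := IsClopen.eq_univ ⟨hcl, hop⟩ ⟨⟨c, hc⟩, hu, hv⟩
  obtain ⟨x, hx, hne⟩ := hnt
  have hm : (⟨x, hx⟩ : Icc 0 T) ∈ S := by rw [this]; trivial
  exact hne hm.1

lemma sol_finite {a u v : ℝ → ℝ} {T : ℝ} (hT : 0 < T) (h : IsSolOn a u v 0 T)
    (ha : IntegrableOn a (Icc 0 T)) (hnt : ∃ x ∈ Icc 0 T, u x ≠ 0) :
    (Icc 0 T ∩ {x | u x = 0}).Finite := by
  by_contra hinf
  obtain ⟨c, hc, hacc⟩ := Set.Infinite.exists_accPt_of_subset_isCompact hinf isCompact_Icc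
    inter_subset_left
  have hev := (h.1 c hc)
  have hfr := accPt_iff_frequently.1 hacc
  have huc : u c = 0 := by
    have hcl : IsClosed (Icc 0 T ∩ {x | u x = 0}) :=
      (sol_contU h).preimage_isClosed_of_isClosed isClosed_Icc isClosed_singleton
    have : c ∈ closure (Icc 0 T ∩ {x | u x = 0}) := by
      rw [mem_closure_iff_frequently]
      exact hfr.mono fun y hy => hy.2
    rw [hcl.closure_eq] at this
    exact this.2
  have hne := hev.eventually_ne (c := 0) (sol_unique hT h ha hnt hc huc)
  rw [eventually_nhdsWithin_iff] at hne
  obtain ⟨y, ⟨h1, h2, h3⟩, h4⟩ := (hfr.and_eventually hne).exists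
  exact h4 ⟨h2, h1⟩ h3

lemma sol_neg {a u v : ℝ → ℝ} {T : ℝ} (h : IsSolOn a u v 0 T) :
    IsSolOn a (fun x => - u x) (fun x => - v x) 0 T := by
  refine ⟨fun x hx => (h.1 x hx).neg, fun x hx => ?_⟩
  have := h.2 x hx
  simp only [mul_neg, intervalIntegral.integral_neg]
  linarith

lemma sign_const {f : ℝ → ℝ} {p q : ℝ} (hf : ContinuousOn f (Ioo p q))
    (hne : ∀ x ∈ Ioo p q, f x ≠ 0) : (∀ x ∈ Ioo p q, 0 < f x) ∨ (∀ x ∈ Ioo p q, f x < 0) := by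
  by_contra hcon
  push Not at hcon
  obtain ⟨⟨x, hx, h1⟩, ⟨y, hy, h2⟩⟩ := hcon
  obtain ⟨z, hz, h3⟩ := isPreconnected_Ioo.intermediate_value hx hy hf ⟨h1, h2⟩
  exact hne z hz h3

lemma deriv_sign {a u v : ℝ → ℝ} {T : ℝ} (h : IsSolOn a u v 0 T) {p q : ℝ}
    (hp : 0 ≤ p) (hpq : p < q) (hq : q ≤ T) (hup : u p = 0) (huq : u q = 0)
    (hpos : ∀ x ∈ Ioo p q, 0 < u x) : 0 ≤ v p ∧ v q ≤ 0 := by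
  have hsub : Ioo p q ⊆ Icc 0 T := fun x hx => ⟨hp.trans hx.1.le, hx.2.le.trans hq⟩
  constructor
  · have h1 := (h.1 p ⟨hp, hpq.le.trans hq⟩).mono hsub
    rw [hasDerivWithinAt_iff_tendsto_slope' (by simp)] at h1
    have : (𝓝[Ioo p q] p).NeBot := left_nhdsWithin_Ioo_neBot hpq
    refine ge_of_tendsto h1 ?_
    filter_upwards [self_mem_nhdsWithin] with x hx
    rw [slope_def_field, hup]
    exact div_nonneg (by linarith [hpos x hx]) (by linarith [hx.1])
  · have h1 := (h.1 q ⟨hp.trans hpq.le, hq⟩).mono hsub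
    rw [hasDerivWithinAt_iff_tendsto_slope' (by simp)] at h1
    have : (𝓝[Ioo p q] q).NeBot := right_nhdsWithin_Ioo_neBot hpq
    refine le_of_tendsto h1 ?_
    filter_upwards [self_mem_nhdsWithin] with x hx
    rw [slope_def_field, huq]
    exact div_nonpos_of_nonneg_of_nonpos (by linarith [hpos x hx]) (by linarith [hx.2])

lemma F_int {a u v : ℝ → ℝ} {T : ℝ} (hT : 0 < T) (h : IsSolOn a u v 0 T)
    (ha : IntegrableOn a (Icc 0 T)) (w φ p r : ℝ) (hp : 0 ≤ p) (hpr : p ≤ r) (hr : r ≤ T) :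
    IntervalIntegrable (fun x => (a x - w ^ 2) * u x * sin (w * x + φ)) volume p r := by
  have hsub : Icc p r ⊆ Icc 0 T := Icc_subset_Icc hp hr
  have cu : ContinuousOn u (uIcc p r) := by
    rw [uIcc_of_le hpr]; exact (sol_contU h).mono hsub
  have ia : IntervalIntegrable a volume p r :=
    (intervalIntegrable_iff_integrableOn_Icc_of_le hpr).2 (ha.mono_set hsub)
  exact ((ia.sub intervalIntegrable_const).mul_continuousOn cu).mul_continuousOn (by fun_prop)

lemma F_nonneg {a u : ℝ → ℝ} {T w φ p r : ℝ}
    (hage : ∀ᵐ x ∂(volume.restrict (Icc 0 T)), w ^ 2 ≤ a x)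
    (hp : 0 ≤ p) (hr : r ≤ T) (hpos : ∀ x ∈ Ioo p r, 0 < u x)
    (hs : ∀ x ∈ Ioo p r, 0 < sin (w * x + φ)) :
    ∀ᵐ x ∂(volume.restrict (Ioc p r)), 0 ≤ (a x - w ^ 2) * u x * sin (w * x + φ) := by
  rw [ae_restrict_iff' measurableSet_Ioc]
  rw [ae_restrict_iff' measurableSet_Icc] at hage
  have hne : ∀ᵐ x : ℝ, x ≠ r := by simp [ae_iff, measure_singleton]
  filter_upwards [hage, hne] with x h1 h2 h3
  have h4 : x ∈ Ioo p r := ⟨h3.1, lt_of_le_of_ne h3.2 h2⟩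
  have h5 := h1 ⟨hp.trans h3.1.le, h3.2.trans hr⟩
  exact mul_nonneg (mul_nonneg (by linarith) (hpos x h4).le) (hs x h4).le

lemma sturm_half {a u v : ℝ → ℝ} {T w : ℝ} (hT : 0 < T) (hw : 0 < w) (h : IsSolOn a u v 0 T)
    (ha : IntegrableOn a (Icc 0 T)) (hage : ∀ᵐ x ∂(volume.restrict (Icc 0 T)), w ^ 2 ≤ a x)
    {p q : ℝ} (hp : 0 ≤ p) (hpq : p < q) (hq : q ≤ T) (hup : u p = 0)
    (hpos : ∀ x ∈ Ioo p q, 0 < u x) :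
    q - p ≤ π / w ∧ (q - p = π / w → ∀ᵐ x, x ∈ Ioo p q → a x = w ^ 2) := by
  by_cases hle : π / w ≤ q - p
  swap
  · push Not at hle
    exact ⟨hle.le, fun he => absurd he hle.ne⟩
  set r := p + π / w with hr
  have hpw : 0 < π / w := div_pos pi_pos hw
  have hpr : p < r := by linarith
  have hrq : r ≤ q := by linarith
  have hwr : w * r + -(w * p) = π := by rw [hr]; field_simp; ring
  have hs : ∀ x ∈ Ioo p r, 0 < sin (w * x + -(w * p)) := by
    intro x hx
    apply sin_pos_of_pos_of_lt_pi
    · nlinarith [hx.1]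
    · rw [← hwr]; nlinarith [hx.2]
  have hpos' : ∀ x ∈ Ioo p r, 0 < u x := fun x hx => hpos x ⟨hx.1, hx.2.trans_le hrq⟩
  have hF := F_nonneg (φ := -(w * p)) hage hp (hrq.trans hq) hpos' hs
  have hI := F_int hT h ha w (-(w * p)) p r hp hpr.le (hrq.trans hq)
  have e := wronsk hT h ha w (-(w * p)) p r hp hpr.le (hrq.trans hq)
  rw [hwr, hup, add_neg_cancel] at e
  simp only [cos_pi, sin_pi, sin_zero, mul_zero, zero_mul, sub_zero, mul_neg, mul_one] at e
  have hge : 0 ≤ ∫ x in p..r, (a x - w ^ 2) * u x * sin (w * x + -(w * p)) := by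
    rw [intervalIntegral.integral_of_le hpr.le]
    exact integral_nonneg_of_ae hF
  have hur : u r ≤ 0 := by
    by_contra hc
    push Not at hc
    nlinarith [mul_pos hc hw]
  have hrq' : r = q := by
    by_contra hc
    have := hpos r ⟨hpr, lt_of_le_of_ne hrq hc⟩
    linarith
  refine ⟨by linarith, fun _ => ?_⟩
  have hcu : 0 ≤ u r := by
    have hmem : r ∈ closure (Ioo p r) := by rw [closure_Ioo hpr.ne]; exact ⟨hpr.le, le_rfl⟩
    have hcw : ContinuousWithinAt u (Ioo p r) r :=
      (sol_contU h r ⟨hp.trans hpr.le, hrq.trans hq⟩).mono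
        fun x hx => ⟨hp.trans hx.1.le, hx.2.le.trans (hrq.trans hq)⟩
    have : (𝓝[Ioo p r] r).NeBot := right_nhdsWithin_Ioo_neBot hpr
    refine ge_of_tendsto hcw ?_
    filter_upwards [self_mem_nhdsWithin] with x hx
    exact (hpos' x hx).le
  have hu0 : u r = 0 := le_antisymm hur hcu
  rw [hu0, zero_mul, neg_zero, intervalIntegral.integral_of_le hpr.le,
    integral_eq_zero_iff_of_nonneg_ae hF
      ((intervalIntegrable_iff_integrableOn_Ioc_of_le hpr.le).1 hI)] at e
  have e' := (ae_restrict_iff' measurableSet_Ioc).1 e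
  filter_upwards [e'] with x hx hx'
  rw [← hrq'] at hx'
  have h1 := hx ⟨hx'.1, hx'.2.le⟩
  have h2 := hpos' x hx'
  have h3 := hs x hx'
  simp only [Pi.zero_apply, mul_eq_zero, h2.ne', h3.ne', or_false] at h1
  linarith

lemma quarter_left {a u v : ℝ → ℝ} {T w : ℝ} (hT : 0 < T) (hw : 0 < w) (h : IsSolOn a u v 0 T)
    (ha : IntegrableOn a (Icc 0 T)) (hage : ∀ᵐ x ∂(volume.restrict (Icc 0 T)), w ^ 2 ≤ a x)
    {p q : ℝ} (hp : 0 ≤ p) (hpq : p < q) (hq : q ≤ T) (hup : u p = 0)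
    (hpos : ∀ x ∈ Ioo p q, 0 < u x) (hv : ∀ x ∈ Ioo p q, v x ≠ 0) :
    q - p ≤ π / 2 / w := by
  by_contra hc
  push Not at hc
  set r := p + π / 2 / w with hr
  have hpw : 0 < π / 2 / w := div_pos (by positivity) hw
  have hpr : p < r := by linarith
  have hrq : r < q := by linarith
  have hsub : Ioo p q ⊆ Icc 0 T := fun x hx => ⟨hp.trans hx.1.le, hx.2.le.trans hq⟩
  have hwr : w * r + -(w * p) = π / 2 := by rw [hr]; field_simp; ring
  have hs : ∀ x ∈ Ioo p r, 0 < sin (w * x + -(w * p)) := by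
    intro x hx
    apply sin_pos_of_pos_of_lt_pi
    · nlinarith [hx.1]
    · have : w * x + -(w * p) < π / 2 := by rw [← hwr]; nlinarith [hx.2]
      linarith [pi_pos]
  have hpos' : ∀ x ∈ Ioo p r, 0 < u x := fun x hx => hpos x ⟨hx.1, hx.2.trans hrq⟩
  have hF := F_nonneg (φ := -(w * p)) hage hp (hrq.le.trans hq) hpos' hs
  have e := wronsk hT h ha w (-(w * p)) p r hp hpr.le (hrq.le.trans hq)
  rw [hwr, hup, add_neg_cancel] at e
  simp only [cos_pi_div_two, sin_pi_div_two, sin_zero, mul_zero, zero_mul, sub_zero,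
    mul_one, zero_sub] at e
  have hge : 0 ≤ ∫ x in p..r, (a x - w ^ 2) * u x * sin (w * x + -(w * p)) := by
    rw [intervalIntegral.integral_of_le hpr.le]
    exact integral_nonneg_of_ae hF
  obtain ⟨z, hz, hz'⟩ := exists_hasDerivAt_eq_slope u v hpr
    ((sol_contU h).mono (Icc_subset_Icc hp (hrq.le.trans hq)))
    (fun x hx => sol_derivU h ⟨hp.trans_lt hx.1, hx.2.trans (hrq.trans_le hq)⟩)
  have hvz : 0 < v z := by
    rw [hz', hup, sub_zero]
    exact div_pos (hpos r ⟨hpr, hrq⟩) (by linarith)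
  rcases sign_const ((sol_contV hT h ha).mono hsub) hv with hh | hh
  · linarith [hh r ⟨hpr, hrq⟩]
  · linarith [hh z ⟨hz.1, hz.2.trans hrq⟩]

lemma quarter_right {a u v : ℝ → ℝ} {T w : ℝ} (hT : 0 < T) (hw : 0 < w) (h : IsSolOn a u v 0 T)
    (ha : IntegrableOn a (Icc 0 T)) (hage : ∀ᵐ x ∂(volume.restrict (Icc 0 T)), w ^ 2 ≤ a x)
    {p q : ℝ} (hp : 0 ≤ p) (hpq : p < q) (hq : q ≤ T) (huq : u q = 0)
    (hpos : ∀ x ∈ Ioo p q, 0 < u x) (hv : ∀ x ∈ Ioo p q, v x ≠ 0) :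
    q - p ≤ π / 2 / w := by
  by_contra hc
  push Not at hc
  set r := q - π / 2 / w with hr
  have hpw : 0 < π / 2 / w := div_pos (by positivity) hw
  have hpr : p < r := by linarith
  have hrq : r < q := by linarith
  have hsub : Ioo p q ⊆ Icc 0 T := fun x hx => ⟨hp.trans hx.1.le, hx.2.le.trans hq⟩
  have hwr : w * r + (π - w * q) = π / 2 := by rw [hr]; field_simp; ring
  have hwq : w * q + (π - w * q) = π := by ring
  have hs : ∀ x ∈ Ioo r q, 0 < sin (w * x + (π - w * q)) := by
    intro x hx
    apply sin_pos_of_pos_of_lt_pi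
    · have : π / 2 < w * x + (π - w * q) := by rw [← hwr]; nlinarith [hx.1]
      linarith [pi_pos]
    · nlinarith [hx.2]
  have hpos' : ∀ x ∈ Ioo r q, 0 < u x := fun x hx => hpos x ⟨hpr.trans hx.1, hx.2⟩
  have hF := F_nonneg (φ := π - w * q) hage (hp.trans hpr.le) hq hpos' hs
  have e := wronsk hT h ha w (π - w * q) r q (hp.trans hpr.le) hrq.le hq
  rw [hwr, huq, hwq] at e
  simp only [cos_pi_div_two, sin_pi_div_two, sin_pi, mul_zero, zero_mul, sub_zero,
    mul_one, zero_sub, neg_neg] at e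
  have hge : 0 ≤ ∫ x in r..q, (a x - w ^ 2) * u x * sin (w * x + (π - w * q)) := by
    rw [intervalIntegral.integral_of_le hrq.le]
    exact integral_nonneg_of_ae hF
  obtain ⟨z, hz, hz'⟩ := exists_hasDerivAt_eq_slope u v hrq
    ((sol_contU h).mono (Icc_subset_Icc (hp.trans hpr.le) hq))
    (fun x hx => sol_derivU h ⟨hp.trans_lt (hpr.trans hx.1), hx.2.trans_le hq⟩)
  have hvz : v z < 0 := by
    rw [hz', huq, zero_sub]
    exact div_neg_of_neg_of_pos (by linarith [hpos r ⟨hpr, hrq⟩]) (by linarith)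
  rcases sign_const ((sol_contV hT h ha).mono hsub) hv with hh | hh
  · linarith [hh z ⟨hpr.trans hz.1, hz.2⟩]
  · linarith [hh r ⟨hpr, hrq⟩]

lemma quarter {a u v : ℝ → ℝ} {T w : ℝ} (hT : 0 < T) (hw : 0 < w) (h : IsSolOn a u v 0 T)
    (ha : IntegrableOn a (Icc 0 T)) (hage : ∀ᵐ x ∂(volume.restrict (Icc 0 T)), w ^ 2 ≤ a x)
    {p q : ℝ} (hp : 0 ≤ p) (hpq : p < q) (hq : q ≤ T) (hz : u p = 0 ∨ u q = 0)
    (hu : ∀ x ∈ Ioo p q, u x ≠ 0) (hv : ∀ x ∈ Ioo p q, v x ≠ 0) :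
    q - p ≤ π / 2 / w := by
  have hsub : Ioo p q ⊆ Icc 0 T := fun x hx => ⟨hp.trans hx.1.le, hx.2.le.trans hq⟩
  rcases sign_const ((sol_contU h).mono hsub) hu with hh | hh
  · rcases hz with hz | hz
    · exact quarter_left hT hw h ha hage hp hpq hq hz hh hv
    · exact quarter_right hT hw h ha hage hp hpq hq hz hh hv
  · rcases hz with hz | hz
    · exact quarter_left hT hw (sol_neg h) ha hage hp hpq hq (by simp [hz])
        (fun x hx => by linarith [hh x hx]) (fun x hx => neg_ne_zero.2 (hv x hx))
    · exact quarter_right hT hw (sol_neg h) ha hage hp hpq hq (by simp [hz])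
        (fun x hx => by linarith [hh x hx]) (fun x hx => neg_ne_zero.2 (hv x hx))

lemma step {a u v : ℝ → ℝ} {T w : ℝ} (hT : 0 < T) (hw : 0 < w) (h : IsSolOn a u v 0 T)
    (ha : IntegrableOn a (Icc 0 T)) (hage : ∀ᵐ x ∂(volume.restrict (Icc 0 T)), w ^ 2 ≤ a x)
    {p q : ℝ} (hp : 0 ≤ p) (hpq : p < q) (hq : q ≤ T) (hup : u p = 0) (huq : u q = 0)
    (hu : ∀ x ∈ Ioo p q, u x ≠ 0) :
    v p * v q ≤ 0 ∧ q - p ≤ π / w ∧ (q - p = π / w → ∀ᵐ x, x ∈ Ioo p q → a x = w ^ 2) := by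
  have hsub : Ioo p q ⊆ Icc 0 T := fun x hx => ⟨hp.trans hx.1.le, hx.2.le.trans hq⟩
  rcases sign_const ((sol_contU h).mono hsub) hu with hh | hh
  · have h1 := deriv_sign h hp hpq hq hup huq hh
    exact ⟨by nlinarith [h1.1, h1.2], sturm_half hT hw h ha hage hp hpq hq hup hh⟩
  · have h1 := deriv_sign (sol_neg h) hp hpq hq (by simp [hup]) (by simp [huq])
      (fun x hx => by linarith [hh x hx])
    exact ⟨by nlinarith [h1.1, h1.2], sturm_half hT hw (sol_neg h) ha hage hp hpq hq
      (by simp [hup]) (fun x hx => by linarith [hh x hx])⟩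

lemma count {a u v : ℝ → ℝ} {T w : ℝ} (hT : 0 < T) (hw : 0 < w) (h : IsSolOn a u v 0 T)
    (ha : IntegrableOn a (Icc 0 T)) (hage : ∀ᵐ x ∂(volume.restrict (Icc 0 T)), w ^ 2 ≤ a x)
    (hnt : ∃ x ∈ Icc 0 T, u x ≠ 0) (h0 : u 0 = 0) (k : ℕ) :
    ∀ c ∈ Icc 0 T, u c = 0 → (Ico 0 c ∩ {x | u x = 0}).ncard = k →
      0 < (-1) ^ k * (v 0 * v c) ∧ c ≤ k * (π / w) ∧
      (c = k * (π / w) → ∀ᵐ x, x ∈ Ioo 0 c → a x = w ^ 2) := by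
  have hfin : ∀ c ≤ T, (Ico 0 c ∩ {x | u x = 0}).Finite := fun c hc =>
    (sol_finite hT h ha hnt).subset (inter_subset_inter_left _ fun x hx => ⟨hx.1, hx.2.le.trans hc⟩)
  have hv : ∀ c ∈ Icc 0 T, u c = 0 → v c ≠ 0 := fun c hc huc => sol_unique hT h ha hnt hc huc
  induction k with
  | zero =>
    intro c hc huc hcard
    have hc0 : c = 0 := by
      by_contra hne
      have : (0:ℝ) ∈ Ico 0 c ∩ {x | u x = 0} := ⟨⟨le_rfl, lt_of_le_of_ne hc.1 (Ne.symm hne)⟩, h0⟩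
      rw [(ncard_eq_zero (hfin c hc.2)).1 hcard] at this
      exact this
    subst hc0
    refine ⟨?_, by simp, by simp⟩
    have := hv 0 hc huc
    simp only [pow_zero, one_mul]
    exact mul_self_pos.2 this
  | succ k ih =>
    intro c hc huc hcard
    have hne : (Ico 0 c ∩ {x | u x = 0}).Nonempty := by
      rw [← ncard_pos (hfin c hc.2)]; omega
    obtain ⟨p, hp, hmax⟩ := exists_max_image _ id (hfin c hc.2) hne
    have hpc := hp.1.2
    have hpT : p ∈ Icc 0 T := ⟨hp.1.1, hpc.le.trans hc.2⟩
    have hset : Ico 0 c ∩ {x | u x = 0} = insert p (Ico 0 p ∩ {x | u x = 0}) := by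
      ext x
      constructor
      · intro hx
        rcases eq_or_lt_of_le (hmax x hx) with he | hl
        · exact Or.inl he
        · exact Or.inr ⟨⟨hx.1.1, hl⟩, hx.2⟩
      · rintro (rfl | hx)
        · exact hp
        · exact ⟨⟨hx.1.1, hx.1.2.trans hpc⟩, hx.2⟩
    rw [hset, ncard_insert_of_notMem (fun hx => lt_irrefl _ hx.1.2) (hfin p hpT.2)] at hcard
    obtain ⟨i1, i2, i3⟩ := ih p hpT hp.2 (by omega)
    obtain ⟨s1, s2, s3⟩ := step hT hw h ha hage hpT.1 hpc hc.2 hp.2 huc (by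
      intro x hx hux
      have : x ≤ p := hmax x ⟨⟨hpT.1.trans hx.1.le, hx.2⟩, hux⟩
      linarith [hx.1])
    have s1' : v p * v c < 0 :=
      lt_of_le_of_ne s1 (mul_ne_zero (hv p hpT hp.2) (hv c hc huc))
    refine ⟨?_, ?_, ?_⟩
    · have h1 : 0 < ((-1) ^ (k+1) * (v 0 * v c)) * (v p) ^ 2 := by
        have := mul_pos i1 (neg_pos.2 s1')
        calc (0:ℝ) < _ := this
          _ = _ := by ring
      exact pos_of_mul_pos_left h1 (sq_nonneg _)
    · push_cast; linarith
    · intro he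
      push_cast at he
      have e1 : p = k * (π / w) := by linarith
      have e2 : c - p = π / w := by linarith
      have hne : ∀ᵐ x : ℝ, x ≠ p := by simp [ae_iff, measure_singleton]
      filter_upwards [i3 e1, s3 e2, hne] with x h1 h2 h3 h4
      rcases lt_or_gt_of_ne h3 with h5 | h5
      · exact h1 ⟨h4.1, h5⟩
      · exact h2 ⟨h5, h4.2⟩

theorem stmt8 (T : ℝ) (hT : 0 < T) (n : ℕ) (hn : 1 ≤ n)
    (a : ℝ → ℝ) (ha : a ∈ LambdaTildeN T n)
    (u v : ℝ → ℝ) (hsol : AntiperiodicSol T a u v)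
    (hnt : ∃ x ∈ Set.Icc 0 T, u x ≠ 0)
    (h0 : u 0 = 0) (hTz : u T = 0) :
    (Set.Ico 0 T ∩ {x | u x = 0}).Finite ∧
    Odd (Set.Ico 0 T ∩ {x | u x = 0}).ncard ∧
    2 * n + 1 ≤ (Set.Ico 0 T ∩ {x | u x = 0}).ncard ∧
    (∀ x y : ℝ, x ∈ Set.Icc 0 T → y ∈ Set.Icc 0 T → x < y →
      ((u x = 0 ∧ v y = 0) ∨ (v x = 0 ∧ u y = 0)) →
      (∀ z : ℝ, x < z → z < y → u z ≠ 0 ∧ v z ≠ 0) →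
      y - x ≤ T / (2 * (2 * (n : ℝ) - 1))) := by
  obtain ⟨⟨-, -, hai⟩, ⟨hage, hpos⟩, -⟩ := ha
  obtain ⟨h, -, hvv⟩ := hsol
  have hn' : (1:ℝ) ≤ n := by exact_mod_cast hn
  have hn1 : (0:ℝ) < 2 * n - 1 := by linarith
  set w : ℝ := (2 * (n:ℝ) - 1) * π / T with hwdef
  have hw : 0 < w := by have := pi_pos; positivity
  have hlam : lamT T n = w ^ 2 := by rw [lamT, hwdef]; ring
  have hpw : π / w = T / (2 * n - 1) := by
    rw [hwdef]; have := pi_pos.ne'; field_simp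
  rw [hlam] at hage hpos
  have hTm : T ∈ Icc 0 T := ⟨hT.le, le_rfl⟩
  obtain ⟨c1, c2, c3⟩ := count hT hw h hai hage hnt h0 _ T hTm hTz rfl
  set m := (Ico 0 T ∩ {x | u x = 0}).ncard with hm
  have hodd : Odd m := by
    by_contra hc
    rw [Nat.not_odd_iff_even] at hc
    rw [hc.neg_one_pow, one_mul] at c1
    have : v T = - v 0 := by linarith
    rw [this] at c1
    nlinarith [sq_nonneg (v 0)]
  refine ⟨(sol_finite hT h hai hnt).subset (inter_subset_inter_left _ Ico_subset_Icc_self),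
    hodd, ?_, ?_⟩
  · rw [hpw] at c2 c3
    by_contra hc
    have hle : m ≤ 2 * n - 1 := by
      obtain ⟨j, hj⟩ := hodd; omega
    have hle' : (m:ℝ) ≤ 2 * n - 1 := by
      have : m + 1 ≤ 2 * n := by omega
      have : (m:ℝ) + 1 ≤ 2 * n := by exact_mod_cast this
      linarith
    have hq : 0 < T / (2 * (n:ℝ) - 1) := by positivity
    have hTe : (2 * (n:ℝ) - 1) * (T / (2 * n - 1)) = T := by field_simp
    have he : T = m * (T / (2 * n - 1)) := by
      apply le_antisymm c2
      calc m * (T / (2 * (n:ℝ) - 1)) ≤ (2 * (n:ℝ) - 1) * (T / (2 * n - 1)) := by gcongr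
        _ = T := hTe
    have hae := c3 he
    refine hpos.ne' ?_
    have hne0 : ∀ᵐ x : ℝ, x ≠ 0 := by simp [ae_iff, measure_singleton]
    have hneT : ∀ᵐ x : ℝ, x ≠ T := by simp [ae_iff, measure_singleton]
    have : ∀ᵐ x : ℝ, x ∉ {x ∈ Icc 0 T | w ^ 2 < a x} := by
      filter_upwards [hae, hne0, hneT] with x h1 h2 h3 h4
      have := h1 ⟨lt_of_le_of_ne h4.1.1 (Ne.symm h2), lt_of_le_of_ne h4.1.2 h3⟩
      have := h4.2
      linarith
    exact measure_eq_zero_iff_ae_notMem.2 this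
  · intro x y hx hy hxy hz hh
    have := quarter hT hw h hai hage hx.1 hxy hy.2 (hz.imp (·.1) (·.2))
      (fun z hz => (hh z hz.1 hz.2).1) (fun z hz => (hh z hz.1 hz.2).2)
    have e : π / 2 / w = T / (2 * (2 * (n : ℝ) - 1)) := by
      rw [div_right_comm, hpw]; field_simp
    rwa [e] at this
end
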